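/- Let $\{g_k\}_{k\geq 0}$ be positive reals, $c_0 \geq 1$, $c \geq 1$, $0 < \nu \leq 1$, $\theta \geq 0$, and set $\bar\nu = \frac{\nu}{1+\nu}$, $\bar\theta = \min(\theta,\nu)$. Suppose $\log g_1 \leq \log c_0 + (1+\bar\nu)\log g_0$, and for every $k \geq 1$, $g_{k+1} \leq c g_k^{1+\nu} + c g_k^{1+\bar\nu}(g_k/g_{k-1})^\theta$, and $g_0 \leq \min(1, (2c)^{-1/\bar\nu}, c_0^{-1/\bar\nu})$. Then $g_{k+1} \leq g_k$ for all $k$, and there exist sequences $c_k \geq 1$ and $\nu_k$ with $\nu_0 = \bar\nu$, $\nu_k = \min(\nu, \bar\nu + \frac{\bar\theta\nu_{k-1}}{1+\nu_{k-1}})$, $\log c_k = \log(2c) + \frac{\bar\theta}{1+\nu_{k-1}}\log c_{k-1}$ such that $\log g_{k+1} \leq \log c_k + (1+\nu_k)\log g_k$ for all $k \geq 0$, and $\nu_k \geq \nu_\infty - \frac{\bar\theta^k}{(1+\bar\nu)^{2k}}$ where $\nu_\infty$ is the positive root of $\bar\nu + \frac{\bar\theta\nu_\infty}{1+\nu_\infty}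 = \nu_\infty$, and $\log c_k \leq (1 + 1/\bar\nu)\log(2c) + \log c_0$. -/

import Mathlib

/-!
In logarithmic form the recursion reads
`log g (k+1) ≤ log (2c) + max ((1+ν) log g k, (1+b) log g k + t (log g k - log g (k-1)))`
for every `0 ≤ t ≤ θ`, as long as `g` decreases. The choice `t = 0` keeps `g` decreasing, because
`g 0` is so small that `log (2c) + b log (g 0) ≤ 0`. For general `t`, a bound
`log g k ≤ l + (1+n) log g (k-1)` gives `log g k - log g (k-1) ≤ (n log g k + l) / (1+n)`, which
turns the exponent `n` into `min ν (b + t n / (1+n))` and the constant `l` into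
`log (2c) + t l / (1+n)`. The first map contracts `[b, ∞)` by the factor `t / (1+b)²`, the second
one by `t / (1+b)`, which yields the two quantitative bounds.
-/

open Real

/-- The map `x ↦ b + t x / (1 + x)` whose iteration, truncated at `ν`, produces the exponents
`ν_k`. -/
noncomputable def exponentMap (b t x : ℝ) : ℝ := b + t * x / (1 + x)

/-- The exponents `ν_k`, for arbitrary `b` and `t` in place of `ν̄` and `θ̄`. -/
noncomputable def exponentSeq (ν b t : ℝ) : ℕ → ℝ
  | 0 => b
  | k + 1 => min ν (exponentMap b t (exponentSeq ν b t k))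

/-- The exponent `ν_∞`: the larger root of `x² + (1 - b - t) x = b`, which is the positive fixed
point of `exponentMap b t`. -/
noncomputable def limitExponent (b t : ℝ) : ℝ :=
  -(1 / 2) * (1 - b - t) + 1 / 2 * √((1 - b - t) ^ 2 + 4 * b)

/-- The solution of the affine recursion `l (k + 1) = a + r k * l k`, used for the logarithms of
the constants `c_k`. -/
noncomputable def affineSeq (a l₀ : ℝ) (r : ℕ → ℝ) : ℕ → ℝ
  | 0 => l₀
  | k + 1 => a + r k * affineSeq a l₀ r k

section Exponents

variable {ν b t x y d : ℝ}

theorem le_exponentMap (ht : 0 ≤ t) (hx : 0 ≤ x) : b ≤ exponentMap b t x :=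
  le_add_of_nonneg_right (by positivity)

theorem exponentMap_sub_exponentMap (hx : 1 + x ≠ 0) (hy : 1 + y ≠ 0) :
    exponentMap b t x - exponentMap b t y = t * (x - y) / ((1 + x) * (1 + y)) := by
  unfold exponentMap
  field_simp
  ring

theorem exponentMap_sub_exponentMap_le (hb : 0 ≤ b) (ht : 0 ≤ t) (hx : b ≤ x) (hy : b ≤ y)
    (hd : 0 ≤ d) (hxy : x - y ≤ d) :
    exponentMap b t x - exponentMap b t y ≤ t / (1 + b) ^ 2 * d := by
  rw [exponentMap_sub_exponentMap (by linarith) (by linarith), div_mul_eq_mul_div, sq]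
  have hx0 : 0 ≤ x := hb.trans hx
  gcongr

theorem le_exponentSeq (hb : 0 ≤ b) (hbν : b ≤ ν) (ht : 0 ≤ t) : ∀ k, b ≤ exponentSeq ν b t k
  | 0 => le_rfl
  | k + 1 => le_min hbν (le_exponentMap ht (hb.trans (le_exponentSeq hb hbν ht k)))

theorem limitExponent_pos (hb : 0 < b) : 0 < limitExponent b t := by
  have : 1 - b - t < √((1 - b - t) ^ 2 + 4 * b) := lt_sqrt_of_sq_lt (by linarith)
  unfold limitExponent
  linarith

theorem exponentMap_limitExponent (hb : 0 < b) :
    exponentMap b t (limitExponent b t) = limitExponent b t := by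
  have hpos : 0 < limitExponent b t := limitExponent_pos hb
  have hsqrt : √((1 - b - t) ^ 2 + 4 * b) ^ 2 = (1 - b - t) ^ 2 + 4 * b := sq_sqrt (by positivity)
  have hroot : limitExponent b t ^ 2 + (1 - b - t) * limitExponent b t = b := by
    unfold limitExponent
    linear_combination (1 / 4) * hsqrt
  unfold exponentMap
  field_simp
  linear_combination -hroot

theorem le_limitExponent (hb : 0 < b) (ht : 0 ≤ t) : b ≤ limitExponent b t :=
  exponentMap_limitExponent (t := t) hb ▸ le_exponentMap ht (limitExponent_pos hb).le

theorem limitExponent_le_add_one (hb : 0 < b) (ht : t ≤ 1) : limitExponent b t ≤ b + 1 := by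
  have hpos : 0 < limitExponent b t := limitExponent_pos hb
  rw [← exponentMap_limitExponent hb, exponentMap]
  gcongr
  rw [div_le_one (by positivity)]
  nlinarith

theorem limitExponent_le_of_exponentMap_le (hb : 0 ≤ b) (hx : 0 < x)
    (h : exponentMap b t x ≤ x) : limitExponent b t ≤ x := by
  have hquad : b ≤ x * (x + (1 - b - t)) := by
    have : t * x / (1 + x) ≤ x - b := by unfold exponentMap at h; linarith
    rw [div_le_iff₀ (by positivity)] at this
    linarith
  have hx' : 0 ≤ x + (1 - b - t) := nonneg_of_mul_nonneg_right (hb.trans hquad) hx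
  have hsqrt : √((1 - b - t) ^ 2 + 4 * b) ≤ 2 * x + (1 - b - t) :=
    sqrt_le_iff.2 ⟨by linarith, by linarith⟩
  unfold limitExponent
  linarith

theorem limitExponent_sub_le_exponentSeq (hν : 0 < ν) (hb : 0 < b) (ht : 0 ≤ t) (ht1 : t ≤ 1)
    (hmap : exponentMap b t ν ≤ ν) (k : ℕ) :
    limitExponent b t - t ^ k / (1 + b) ^ (2 * k) ≤ exponentSeq ν b t k := by
  have hbν : b ≤ ν := (le_exponentMap ht hν.le).trans hmap
  rw [pow_mul, ← div_pow]
  induction k with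
  | zero =>
    rw [pow_zero, sub_le_iff_le_add]
    exact limitExponent_le_add_one hb ht1
  | succ k ih =>
    have hcontract := exponentMap_sub_exponentMap_le hb.le ht (le_limitExponent hb ht)
      (le_exponentSeq hb.le hbν ht k) (by positivity) (sub_le_comm.1 ih)
    rw [exponentMap_limitExponent hb, ← pow_succ'] at hcontract
    have hpow : 0 ≤ (t / (1 + b) ^ 2) ^ (k + 1) := by positivity
    have hle : limitExponent b t ≤ ν := limitExponent_le_of_exponentMap_le hb.le hν hmap
    exact le_min (by linarith) (by linarith)

end Exponents

section AffineSeq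

variable {a l₀ ρ : ℝ} {r : ℕ → ℝ}

theorem affineSeq_nonneg (ha : 0 ≤ a) (hl₀ : 0 ≤ l₀) (hr : ∀ k, 0 ≤ r k) :
    ∀ k, 0 ≤ affineSeq a l₀ r k
  | 0 => hl₀
  | k + 1 => add_nonneg ha (mul_nonneg (hr k) (affineSeq_nonneg ha hl₀ hr k))

theorem affineSeq_le (ha : 0 ≤ a) (hl₀ : 0 ≤ l₀) (hr : ∀ k, 0 ≤ r k) (hrρ : ∀ k, r k ≤ ρ)
    (hρ : ρ < 1) (k : ℕ) : affineSeq a l₀ r k ≤ a / (1 - ρ) + l₀ := by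
  have hρ' : 0 < 1 - ρ := sub_pos.2 hρ
  have hρ0 : 0 ≤ ρ := (hr 0).trans (hrρ 0)
  induction k with
  | zero => exact le_add_of_nonneg_left (by positivity)
  | succ k ih =>
    calc a + r k * affineSeq a l₀ r k ≤ a + ρ * (a / (1 - ρ) + l₀) := by
          gcongr
          exacts [affineSeq_nonneg ha hl₀ hr k, hrρ k]
      _ = a / (1 - ρ) + ρ * l₀ := by field_simp; ring
      _ ≤ a / (1 - ρ) + l₀ := by gcongr; exact mul_le_of_le_one_left hl₀ hρ.le

end AffineSeq

section Step

variable {b c l n s t x y z θ ν : ℝ}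

theorem log_add_mul_log_nonpos_of_le_rpow (hb : 0 < b) (hx : 0 < x) (hy : 0 < y)
    (h : x ≤ y ^ (-(1 / b))) : log y + b * log x ≤ 0 := by
  calc log y + b * log x ≤ log y + b * (-(1 / b) * log y) := by
        gcongr
        exact (le_rpow_iff_log_le hx hy).1 h
    _ = 0 := by field_simp; ring

theorem log_le_log_two_mul_add (hc : 0 < c) (hx : 0 < x) (hy : 0 < y) (hz : 0 < z) (hyx : y ≤ x)
    (ht : t ≤ θ) (hrec : z ≤ c * y ^ (1 + ν) + c * y ^ (1 + b) * (y / x) ^ θ)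
    (hν : (1 + ν) * log y ≤ s) (hb : (1 + b) * log y + t * (log y - log x) ≤ s) :
    log z ≤ log (2 * c) + s := by
  have hfirst : y ^ (1 + ν) ≤ exp s := by
    rwa [rpow_le_iff_le_log hy (exp_pos s), log_exp]
  have hsecond : y ^ (1 + b) * (y / x) ^ θ ≤ exp s := by
    calc y ^ (1 + b) * (y / x) ^ θ ≤ y ^ (1 + b) * (y / x) ^ t := by
          gcongr ?_ * ?_
          exact rpow_le_rpow_of_exponent_ge (by positivity) ((div_le_one hx).2 hyx) ht
      _ = exp ((1 + b) * log y + t * (log y - log x)) := by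
          rw [exp_add, ← log_div hy.ne' hx.ne', mul_comm (1 + b), mul_comm t,
            ← rpow_def_of_pos hy, ← rpow_def_of_pos (by positivity)]
      _ ≤ exp s := exp_le_exp.2 hb
  rw [log_le_iff_le_exp hz, exp_add, exp_log (by positivity)]
  calc z ≤ c * y ^ (1 + ν) + c * (y ^ (1 + b) * (y / x) ^ θ) := by rwa [← mul_assoc]
    _ ≤ c * exp s + c * exp s := by gcongr
    _ = 2 * c * exp s := by ring

theorem sub_le_of_le_add_one_add_mul (hn : 0 < 1 + n) (h : y ≤ l + (1 + n) * x) :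
    y - x ≤ (n * y + l) / (1 + n) := by
  rw [le_div_iff₀ hn]
  linarith

theorem log_le_add_one_add_min_exponentMap_mul_log (hc : 0 < c) (hx : 0 < x) (hy : 0 < y)
    (hz : 0 < z) (hyx : y ≤ x) (hy1 : y ≤ 1) (ht : 0 ≤ t) (htθ : t ≤ θ) (hn : 0 < 1 + n)
    (hl : 0 ≤ l) (hrec : z ≤ c * y ^ (1 + ν) + c * y ^ (1 + b) * (y / x) ^ θ)
    (hprev : log y ≤ l + (1 + n) * log x) :
    log z ≤ log (2 * c) + t / (1 + n) * l + (1 + min ν (exponentMap b t n)) * log y := by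
  have hlog : log y ≤ 0 := log_nonpos hy.le hy1
  rw [add_assoc]
  refine log_le_log_two_mul_add hc hx hy hz hyx htθ hrec ?_ ?_
  · have hl' : 0 ≤ t / (1 + n) * l := by positivity
    have := mul_le_mul_of_nonpos_right (min_le_left ν (exponentMap b t n)) hlog
    linarith
  · calc (1 + b) * log y + t * (log y - log x)
        ≤ (1 + b) * log y + t * ((n * log y + l) / (1 + n)) := by
          gcongr
          exact sub_le_of_le_add_one_add_mul hn hprev
      _ = t / (1 + n) * l + (1 + exponentMap b t n) * log y := by unfold exponentMap; ring
      _ ≤ t / (1 + n) * l + (1 + min ν (exponentMap b t n)) * log y := by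
          refine add_le_add_right (mul_le_mul_of_nonpos_right ?_ hlog) _
          gcongr
          exact min_le_right _ _

end Step

section Recursion

variable {g : ℕ → ℝ} {b c l₀ t θ ν : ℝ}

theorem antitone_of_recursion (hg : ∀ k, 0 < g k) (hc : 0 < c) (hb : 0 ≤ b) (hbν : b ≤ ν)
    (hθ : 0 ≤ θ) (hg0 : g 0 ≤ 1) (h10 : g 1 ≤ g 0) (hsmall : log (2 * c) + b * log (g 0) ≤ 0)
    (hrec : ∀ k, g (k + 2) ≤
      c * g (k + 1) ^ (1 + ν) + c * g (k + 1) ^ (1 + b) * (g (k + 1) / g k) ^ θ) :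
    Antitone g := by
  suffices h : ∀ k, g (k + 1) ≤ g k ∧ g k ≤ g 0 from antitone_nat_of_succ_le fun k => (h k).1
  intro k
  induction k with
  | zero => exact ⟨h10, le_rfl⟩
  | succ k ih =>
    have hle : g (k + 1) ≤ g 0 := ih.1.trans ih.2
    refine ⟨(log_le_log_iff (hg _) (hg _)).1 ?_, hle⟩
    have hlog : log (g (k + 1)) ≤ 0 := log_nonpos (hg _).le (hle.trans hg0)
    calc log (g (k + 2)) ≤ log (2 * c) + (1 + b) * log (g (k + 1)) :=
          log_le_log_two_mul_add hc (hg k) (hg _) (hg _) ih.1 hθ (hrec k)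
            (mul_le_mul_of_nonpos_right (by gcongr) hlog) (by simp)
      _ = log (2 * c) + b * log (g (k + 1)) + log (g (k + 1)) := by ring
      _ ≤ log (2 * c) + b * log (g 0) + log (g (k + 1)) := by
          gcongr
          exact hg _
      _ ≤ log (g (k + 1)) := add_le_of_nonpos_left hsmall

theorem log_le_affineSeq_add_one_add_exponentSeq_mul_log (hg : ∀ k, 0 < g k) (hanti : Antitone g)
    (hg0 : g 0 ≤ 1) (hc : 1 ≤ 2 * c) (hl₀ : 0 ≤ l₀) (hb : 0 ≤ b) (hbν : b ≤ ν) (ht : 0 ≤ t)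
    (htθ : t ≤ θ) (h1 : log (g 1) ≤ l₀ + (1 + b) * log (g 0))
    (hrec : ∀ k, g (k + 2) ≤
      c * g (k + 1) ^ (1 + ν) + c * g (k + 1) ^ (1 + b) * (g (k + 1) / g k) ^ θ) (k : ℕ) :
    log (g (k + 1)) ≤ affineSeq (log (2 * c)) l₀ (fun j => t / (1 + exponentSeq ν b t j)) k +
      (1 + exponentSeq ν b t k) * log (g k) := by
  have hpos : ∀ j, 0 < 1 + exponentSeq ν b t j := fun j => by
    linarith [le_exponentSeq hb hbν ht j]
  induction k with
  | zero => exact h1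
  | succ k ih =>
    exact log_le_add_one_add_min_exponentMap_mul_log (by linarith) (hg k) (hg _) (hg _)
      (hanti k.le_succ) ((hanti (Nat.zero_le _)).trans hg0) ht htθ (hpos k)
      (affineSeq_nonneg (log_nonneg hc) hl₀ (fun j => div_nonneg ht (hpos j).le) k) (hrec k) ih

end Recursion

theorem affineSeq_exponentSeq_le {a b l₀ t ν : ℝ} (ha : 0 ≤ a) (hl₀ : 0 ≤ l₀) (hb : 0 < b)
    (hbν : b ≤ ν) (ht : 0 ≤ t) (ht1 : t ≤ 1) (k : ℕ) :
    affineSeq a l₀ (fun j => t / (1 + exponentSeq ν b t j)) k ≤ (1 + 1 / b) * a + l₀ := by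
  have hN : ∀ j, b ≤ exponentSeq ν b t j := le_exponentSeq hb.le hbν ht
  have hsum : a / (1 - 1 / (1 + b)) = (1 + 1 / b) * a := by
    rw [one_sub_div (by positivity), add_sub_cancel_left]
    field_simp
    ring
  rw [← hsum]
  refine affineSeq_le ha hl₀ (fun j => div_nonneg ht (by linarith [hN j])) (fun j => ?_) ?_ k
  · have := hN j
    gcongr
  · exact (div_lt_one (by positivity)).2 (by linarith)

theorem exponentMap_div_one_add_le {t ν : ℝ} (hν : 0 < ν) (ht : t ≤ ν) :
    exponentMap (ν / (1 + ν)) t ν ≤ ν :=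
  calc ν / (1 + ν) + t * ν / (1 + ν) ≤ ν / (1 + ν) + ν * ν / (1 + ν) := by gcongr
    _ = ν := by field_simp

theorem stmt8_general (g : ℕ → ℝ) (c₀ c ν θ b t : ℝ) (hg : ∀ k, 0 < g k) (hc₀ : 1 ≤ c₀)
    (hc : 1 ≤ 2 * c) (hν : 0 < ν) (hb : 0 < b) (ht : 0 ≤ t) (htθ : t ≤ θ) (ht1 : t ≤ 1)
    (hmap : exponentMap b t ν ≤ ν) (h1 : log (g 1) ≤ log c₀ + (1 + b) * log (g 0))
    (hrec : ∀ k, 1 ≤ k →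
      g (k + 1) ≤ c * g k ^ (1 + ν) + c * g k ^ (1 + b) * (g k / g (k - 1)) ^ θ)
    (hg0 : g 0 ≤ min ((2 * c) ^ (-(1 / b))) (c₀ ^ (-(1 / b)))) :
    ∃ C N : ℕ → ℝ, C 0 = c₀ ∧ N 0 = b ∧
      (∀ k, 1 ≤ k → N k = min ν (b + t * N (k - 1) / (1 + N (k - 1)))) ∧
      (∀ k, 1 ≤ k → log (C k) = log (2 * c) + t / (1 + N (k - 1)) * log (C (k - 1))) ∧
      (∀ k, 1 ≤ C k) ∧
      (∀ k, g (k + 1) ≤ g k) ∧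
      (∀ k, log (g (k + 1)) ≤ log (C k) + (1 + N k) * log (g k)) ∧
      (∀ k, limitExponent b t - t ^ k / (1 + b) ^ (2 * k) ≤ N k) ∧
      (∀ k, log (C k) ≤ (1 + 1 / b) * log (2 * c) + log c₀) := by
  have hbν : b ≤ ν := (le_exponentMap ht hν.le).trans hmap
  have hl₀ : 0 ≤ log c₀ := log_nonneg hc₀
  have ha : 0 ≤ log (2 * c) := log_nonneg hc
  have hsmall₂ := log_add_mul_log_nonpos_of_le_rpow hb (hg 0) (by linarith) (le_min_iff.1 hg0).1
  have hsmall₀ := log_add_mul_log_nonpos_of_le_rpow hb (hg 0) (by linarith) (le_min_iff.1 hg0).2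
  have hg0_le : g 0 ≤ 1 := (log_nonpos_iff (hg 0).le).1 (by nlinarith)
  have h10 : g 1 ≤ g 0 := (log_le_log_iff (hg 1) (hg 0)).1 (by linarith)
  have hrec' := fun k => hrec (k + 1) k.succ_pos
  have hanti : Antitone g := antitone_of_recursion hg (by linarith) hb.le hbν (ht.trans htθ)
    hg0_le h10 hsmall₂ hrec'
  set N := exponentSeq ν b t
  have hr (k : ℕ) : 0 ≤ t / (1 + N k) :=
    div_nonneg ht (by linarith [le_exponentSeq hb.le hbν ht k])
  set L := affineSeq (log (2 * c)) (log c₀) fun k => t / (1 + N k)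
  refine ⟨fun k => exp (L k), N, exp_log (by linarith), rfl, Nat.le_induction rfl fun _ _ _ => rfl,
    ?_, fun k => one_le_exp (affineSeq_nonneg ha hl₀ hr k), fun k => hanti k.le_succ, ?_,
    limitExponent_sub_le_exponentSeq hν hb ht ht1 hmap, ?_⟩ <;> simp only [log_exp]
  · exact Nat.le_induction rfl fun _ _ _ => rfl
  · exact log_le_affineSeq_add_one_add_exponentSeq_mul_log hg hanti hg0_le hc hl₀ hb.le hbν ht
      htθ h1 hrec'
  · exact affineSeq_exponentSeq_le ha hl₀ hb hbν ht ht1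

theorem stmt8 (g : ℕ → ℝ) (c₀ c ν θ : ℝ)
    (hg : ∀ k, 0 < g k) (hc0 : 1 ≤ c₀) (hc : 1 ≤ c)
    (hν0 : 0 < ν) (hν1 : ν ≤ 1) (hθ : 0 ≤ θ) :
    let νb := ν / (1 + ν)
    let θb := min θ ν
    let νinf := -(1 / 2) * (1 - νb - θb) +
      1 / 2 * Real.sqrt ((1 - νb - θb) ^ 2 + 4 * νb)
    Real.log (g 1) ≤ Real.log c₀ + (1 + νb) * Real.log (g 0) →
    (∀ k, 1 ≤ k →
      g (k + 1) ≤ c * g k ^ (1 + ν) + c * g k ^ (1 + νb) * (g k / g (k - 1)) ^ θ) →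
    g 0 ≤ min 1 (min ((2 * c) ^ (-(1 / νb))) (c₀ ^ (-(1 / νb)))) →
    ∃ C N : ℕ → ℝ, C 0 = c₀ ∧ N 0 = νb ∧
      (∀ k, 1 ≤ k → N k = min ν (νb + θb * N (k - 1) / (1 + N (k - 1)))) ∧
      (∀ k, 1 ≤ k →
        Real.log (C k) = Real.log (2 * c) + θb / (1 + N (k - 1)) * Real.log (C (k - 1))) ∧
      (∀ k, 1 ≤ C k) ∧
      (∀ k, g (k + 1) ≤ g k) ∧
      (∀ k, Real.log (g (k + 1)) ≤ Real.log (C k) + (1 + N k) * Real.log (g k)) ∧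
      (∀ k, νinf - θb ^ k / (1 + νb) ^ (2 * k) ≤ N k) ∧
      (∀ k, Real.log (C k) ≤ (1 + 1 / νb) * Real.log (2 * c) + Real.log c₀) := by
  intro νb θb νinf h1 hrec hg0
  exact stmt8_general g c₀ c ν θ νb θb hg hc0 (by linarith) hν0 (by positivity) (le_min hθ hν0.le)
    (min_le_left θ ν) (min_le_of_right_le hν1) (exponentMap_div_one_add_le hν0 (min_le_right θ ν))
    h1 hrec (le_min_iff.1 hg0).2
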